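/- Let x be a surface patch with a rounded corner at (0,0), with limit normal n. Then there exist constants C > 0 and H' ∈ (0,H] such that for all (u,v) ∈ [0,H']² \ {(0,0)}, the cross product x_u(u,v) × x_v(u,v) is nonzero and the unit normal ν(u,v) = (x_u(u,v) × x_v(u,v))/‖x_u(u,v) × x_v(u,v)‖ satisfies ‖ν(u,v) − n‖ ≤ C · max{u,v}. -/

import Mathlib

/-!
The field `N = x_u × x_v` is `C²` and vanishes at the origin, because `x_u` and `x_v` are parallel
there. By bilinearity of the cross product and symmetry of the second derivative, its differential
at the origin is `(u, v) ↦ u • (t × r) + v • (t × s)` (`normalField_fderiv`). Coplanarity and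
onesidedness give `t × s = κ • (t × r)` with `κ > 0` (`cross3_pos_multiple`), so a second-order
Taylor estimate (`taylor_two`) yields `N(u,v) = (u + κ v) • (t × r) + O(max(u,v)²)`. On the closed
quadrant the linear term has direction exactly `n` and norm at least a constant times `max(u,v)`.
Normalizing costs at most twice the remainder divided by that norm (`norm_normalize_sub_le`),
which is `O(max(u,v))` (`direction_rate`).
-/

open scoped RealInnerProductSpace

noncomputable section

/-- ℝ³ with the Euclidean inner product and norm. -/
abbrev E3 : Type := EuclideanSpace ℝ (Fin 3)

/-- The cross product on Euclidean ℝ³. -/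
def cross3 (a b : E3) : E3 :=
  (WithLp.equiv 2 (Fin 3 → ℝ)).symm
    (crossProduct ((WithLp.equiv 2 (Fin 3 → ℝ)) a) ((WithLp.equiv 2 (Fin 3 → ℝ)) b))

/-- Partial derivative with respect to the first variable. -/
def pd1 (x : ℝ × ℝ → E3) (p : ℝ × ℝ) : E3 := fderiv ℝ x p (1, 0)

/-- Partial derivative with respect to the second variable. -/
def pd2 (x : ℝ × ℝ → E3) (p : ℝ × ℝ) : E3 := fderiv ℝ x p (0, 1)

/-- The cross product on `E3` as a continuous bilinear map. -/
def crossL : E3 →L[ℝ] E3 →L[ℝ] E3 :=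
  (LinearMap.mk₂ ℝ cross3
    (by intro a b c; simp [cross3]) (by intro k a b; simp [cross3])
    (by intro a b c; simp [cross3]) (by intro k a b; simp [cross3])).toContinuousBilinearMap

lemma crossL_apply (a b : E3) : crossL a b = cross3 a b := rfl

lemma crossL_self (a : E3) : crossL a a = 0 := by
  simp [crossL_apply, cross3]

lemma crossL_anticomm (a b : E3) : crossL a b = -crossL b a := by
  have h := crossL_self (a + b)
  simp only [map_add, add_apply, crossL_self, zero_add, add_zero] at h
  rw [add_comm] at h
  exact eq_neg_of_add_eq_zero_left (by rw [add_comm] at h; rwa [add_comm])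

/-- Second-order Taylor estimate at the origin for a `C²` map. -/
lemma taylor_two {E F : Type*} [NormedAddCommGroup E] [NormedSpace ℝ E]
    [NormedAddCommGroup F] [NormedSpace ℝ F] {f : E → F} (hf : ContDiff ℝ 2 f) :
    ∃ K : ℝ, 0 ≤ K ∧ ∃ δ : ℝ, 0 < δ ∧ ∀ p : E, ‖p‖ ≤ δ →
      ‖f p - f 0 - fderiv ℝ f 0 p‖ ≤ K * ‖p‖ ^ 2 := by
  have h1 : ContDiff ℝ 1 (fderiv ℝ f) := hf.fderiv_right (by norm_num)
  obtain ⟨K, U, hU, hL⟩ := (h1.contDiffAt (x := (0 : E))).exists_lipschitzOnWith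
  obtain ⟨δ, hδ, hball⟩ := Metric.nhds_basis_closedBall.mem_iff.1 hU
  refine ⟨K, K.2, δ, hδ, fun p hp => ?_⟩
  -- The mean value inequality is applied on the ball of radius `‖p‖`, where the derivative varies
  -- by at most `K * ‖p‖`.
  have key := (convex_closedBall (0 : E) ‖p‖).norm_image_sub_le_of_norm_fderiv_le' (𝕜 := ℝ)
    (f := f) (φ := fderiv ℝ f 0) (C := K * ‖p‖) (x := 0) (y := p)
    (fun q _ => (hf.differentiable (by norm_num)) q)
    (fun q hq => by
      have hq' : ‖q‖ ≤ ‖p‖ := by simpa using hq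
      have := hL.norm_sub_le (hball (by simpa using hq'.trans hp : q ∈ Metric.closedBall (0 : E) δ))
        (hball (by simpa using hδ.le : (0 : E) ∈ Metric.closedBall (0 : E) δ))
      rw [sub_zero] at this
      exact this.trans (mul_le_mul_of_nonneg_left hq' K.2))
    (by simp) (by simp)
  rw [sub_zero] at key
  calc _ ≤ _ := key
    _ = _ := by ring

lemma norm_normalize_sub_le {E : Type*} [NormedAddCommGroup E] [NormedSpace ℝ E]
    {a b : E} (ha : a ≠ 0) (hb : b ≠ 0) :
    ‖‖a‖⁻¹ • a - ‖b‖⁻¹ • b‖ ≤ 2 * ‖a - b‖ / ‖b‖ := by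
  have ha' : 0 < ‖a‖ := norm_pos_iff.2 ha
  have hb' : 0 < ‖b‖ := norm_pos_iff.2 hb
  have e : ‖a‖⁻¹ • a - ‖b‖⁻¹ • b = ‖b‖⁻¹ • (a - b) + (‖a‖⁻¹ - ‖b‖⁻¹) • a := by
    rw [smul_sub, sub_smul]; abel
  have e2 : ‖(‖a‖⁻¹ - ‖b‖⁻¹) • a‖ = |‖b‖ - ‖a‖| / ‖b‖ := by
    rw [norm_smul, Real.norm_eq_abs, ← abs_of_pos ha', ← abs_mul, abs_of_pos ha',
      ← abs_of_pos hb', ← abs_div, abs_of_pos hb']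
    congr 1
    field_simp
  have e3 : |‖b‖ - ‖a‖| ≤ ‖a - b‖ := by
    rw [abs_sub_comm]; exact abs_norm_sub_norm_le a b
  rw [e]
  refine (norm_add_le _ _).trans ?_
  rw [e2, norm_smul, norm_inv, norm_norm]
  calc ‖b‖⁻¹ * ‖a - b‖ + |‖b‖ - ‖a‖| / ‖b‖
      ≤ ‖b‖⁻¹ * ‖a - b‖ + ‖a - b‖ / ‖b‖ := by gcongr
    _ = _ := by ring

/-- Coplanarity makes `t × r` and `t × s` parallel; onesidedness makes them point the same way. -/
lemma cross3_pos_multiple {t r s : E3} (ht : t ≠ 0)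
    (hcop : ¬ LinearIndependent ℝ ![r, s, t])
    (hone : 0 < ⟪cross3 t r, cross3 t s⟫) :
    ∃ κ : ℝ, 0 < κ ∧ cross3 t s = κ • cross3 t r := by
  rw [Fintype.not_linearIndependent_iff] at hcop
  obtain ⟨g, hg, i, hi⟩ := hcop
  simp only [Fin.sum_univ_three, Matrix.cons_val] at hg
  have hA : cross3 t r ≠ 0 := by
    intro h; simp [h] at hone
  have hpar : g 0 • cross3 t r + g 1 • cross3 t s = 0 := by
    have h := congrArg (crossL t) hg
    simpa only [map_add, map_smul, map_zero, crossL_self, smul_zero, add_zero, crossL_apply] using h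
  have h1 : g 1 ≠ 0 := by
    intro h1
    rw [h1, zero_smul, add_zero] at hpar
    have h0 : g 0 = 0 := (smul_eq_zero.1 hpar).resolve_right hA
    rw [h0, h1, zero_smul, zero_smul, zero_add, zero_add] at hg
    have h2 : g 2 = 0 := (smul_eq_zero.1 hg).resolve_right ht
    fin_cases i
    · exact hi h0
    · exact hi h1
    · exact hi h2
  have hB : cross3 t s = (-(g 0) / g 1) • cross3 t r := by
    have h : g 1 • cross3 t s = (-(g 0)) • cross3 t r := by
      rw [neg_smul]; exact eq_neg_of_add_eq_zero_right hpar
    rw [div_eq_inv_mul, mul_smul, ← h, smul_smul, inv_mul_cancel₀ h1, one_smul]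
  refine ⟨_, ?_, hB⟩
  rw [hB, inner_smul_right] at hone
  exact pos_of_mul_pos_left hone real_inner_self_nonneg

lemma contDiff_pd1 {x : ℝ × ℝ → E3} (hx : ContDiff ℝ 3 x) : ContDiff ℝ 2 (pd1 x) :=
  (hx.fderiv_right (m := 2) (by norm_num)).clm_apply contDiff_const

lemma contDiff_pd2 {x : ℝ × ℝ → E3} (hx : ContDiff ℝ 3 x) : ContDiff ℝ 2 (pd2 x) :=
  (hx.fderiv_right (m := 2) (by norm_num)).clm_apply contDiff_const

/-- Equality of mixed partial derivatives. -/
lemma pd1_pd2_comm {x : ℝ × ℝ → E3} (hx : ContDiff ℝ 3 x) (p : ℝ × ℝ) :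
    pd1 (pd2 x) p = pd2 (pd1 x) p := by
  have hd : DifferentiableAt ℝ (fderiv ℝ x) p :=
    (hx.fderiv_right (m := 2) (by norm_num)).differentiable (by norm_num) p
  have key : ∀ a b : ℝ × ℝ,
      fderiv ℝ (fun q => fderiv ℝ x q a) p b = fderiv ℝ (fderiv ℝ x) p b a := by
    intro a b
    rw [(hd.hasFDerivAt.clm_apply (hasFDerivAt_const a p)).fderiv]
    simp
  have hsymm : IsSymmSndFDerivAt ℝ x p :=
    hx.contDiffAt.isSymmSndFDerivAt (by simp; norm_num)
  change fderiv ℝ (fun q => fderiv ℝ x q (0, 1)) p (1, 0)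
    = fderiv ℝ (fun q => fderiv ℝ x q (1, 0)) p (0, 1)
  rw [key, key]
  exact hsymm.eq _ _

lemma clm_apply_pair (L : ℝ × ℝ →L[ℝ] E3) (u v : ℝ) :
    L (u, v) = u • L (1, 0) + v • L (0, 1) := by
  rw [← map_smul, ← map_smul, ← map_add]
  simp

/-- The unnormalized normal field `x_u × x_v`. -/
def normalField (x : ℝ × ℝ → E3) (p : ℝ × ℝ) : E3 := cross3 (pd1 x p) (pd2 x p)

lemma normalField_eq (x : ℝ × ℝ → E3) :
    normalField x = fun p => crossL (pd1 x p) (pd2 x p) := rfl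

lemma contDiff_normalField {x : ℝ × ℝ → E3} (hx : ContDiff ℝ 3 x) :
    ContDiff ℝ 2 (normalField x) := by
  rw [normalField_eq]
  exact (crossL.contDiff.comp (contDiff_pd1 hx)).clm_apply (contDiff_pd2 hx)

lemma normalField_zero {x : ℝ × ℝ → E3} {t : E3} {lam mu : ℝ}
    (hxi10 : pd1 x (0, 0) = lam • t) (hxi01 : pd2 x (0, 0) = -(mu • t)) :
    normalField x 0 = 0 := by
  rw [normalField_eq, ← Prod.mk_zero_zero]
  simp only [hxi10, hxi01, map_neg, map_smul, smul_apply, crossL_self, smul_zero, neg_zero]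

/-- The differential at the corner of the unnormalized normal field. -/
lemma normalField_fderiv {x : ℝ × ℝ → E3} (hx : ContDiff ℝ 3 x) {t : E3} {lam mu : ℝ}
    (hxi10 : pd1 x (0, 0) = lam • t) (hxi01 : pd2 x (0, 0) = -(mu • t)) (u v : ℝ) :
    fderiv ℝ (normalField x) (0, 0) (u, v) =
      u • crossL t (mu • pd1 (pd1 x) (0, 0) + lam • pd2 (pd1 x) (0, 0)) +
      v • crossL t (lam • pd2 (pd2 x) (0, 0) + mu • pd2 (pd1 x) (0, 0)) := by
  have h1 := ((contDiff_pd1 hx).differentiable (by norm_num) (0, 0)).hasFDerivAt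
  have h2 := ((contDiff_pd2 hx).differentiable (by norm_num) (0, 0)).hasFDerivAt
  rw [normalField_eq, (crossL.hasFDerivAt_of_bilinear h1 h2).fderiv, clm_apply_pair]
  have e11 : fderiv ℝ (pd1 x) (0, 0) (1, 0) = pd1 (pd1 x) (0, 0) := rfl
  have e12 : fderiv ℝ (pd1 x) (0, 0) (0, 1) = pd2 (pd1 x) (0, 0) := rfl
  have e21 : fderiv ℝ (pd2 x) (0, 0) (1, 0) = pd2 (pd1 x) (0, 0) := pd1_pd2_comm hx _
  have e22 : fderiv ℝ (pd2 x) (0, 0) (0, 1) = pd2 (pd2 x) (0, 0) := rfl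
  simp only [add_apply, ContinuousLinearMap.precompR_apply, ContinuousLinearMap.precompL_apply,
    ContinuousLinearMap.compL_apply, ContinuousLinearMap.comp_apply]
  rw [e11, e12, e21, e22, hxi10, hxi01]
  simp only [map_add, map_smul, map_neg, smul_apply]
  rw [crossL_anticomm (pd1 (pd1 x) (0, 0)) t, crossL_anticomm (pd2 (pd1 x) (0, 0)) t]
  module

/-- A `C²` map on the plane that vanishes at the origin, where its differential is
`(u, v) ↦ (u + κ v) • A` with `κ > 0` and `A ≠ 0`, has on the closed quadrant near the origin a
direction that approaches that of `A` at a linear rate. -/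
lemma direction_rate {E : Type*} [NormedAddCommGroup E] [NormedSpace ℝ E] {N : ℝ × ℝ → E}
    (hNC : ContDiff ℝ 2 N) (hN0 : N 0 = 0) {κ : ℝ} (hκ : 0 < κ) {A : E} (hA : 0 < ‖A‖)
    (hDN : ∀ u v : ℝ, fderiv ℝ N 0 (u, v) = (u + κ * v) • A) {H : ℝ} (hH : 0 < H) :
    ∃ C : ℝ, 0 < C ∧ ∃ H' : ℝ, H' ∈ Set.Ioc 0 H ∧
      ∀ u v : ℝ, u ∈ Set.Icc (0 : ℝ) H' → v ∈ Set.Icc (0 : ℝ) H' → (u, v) ≠ (0, 0) →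
        N (u, v) ≠ 0 ∧ ‖‖N (u, v)‖⁻¹ • N (u, v) - ‖A‖⁻¹ • A‖ ≤ C * max u v := by
  obtain ⟨K, hK, δ, hδ, hT⟩ := taylor_two hNC
  -- `c * max u v` bounds the linear term from below; below the threshold `c / (2 * (K + 1))`
  -- the quadratic remainder is smaller than that.
  set c : ℝ := min 1 κ * ‖A‖ with hc
  have hmin : 0 < min 1 κ := lt_min one_pos hκ
  have hc0 : 0 < c := mul_pos hmin hA
  refine ⟨2 * K / c + 1, by positivity, min H (min δ (c / (2 * (K + 1)))),
    ⟨lt_min hH (lt_min hδ (by positivity)), min_le_left _ _⟩, ?_⟩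
  rintro u v ⟨hu0, hu⟩ ⟨hv0, hv⟩ huv
  set m : ℝ := max u v with hm
  have hm1 : m ≤ min H (min δ (c / (2 * (K + 1)))) := max_le hu hv
  have hmδ : m ≤ δ := hm1.trans ((min_le_right _ _).trans (min_le_left _ _))
  have hmc : m ≤ c / (2 * (K + 1)) := hm1.trans ((min_le_right _ _).trans (min_le_right _ _))
  have hm0 : 0 < m := by
    by_contra h
    have hum : u ≤ m := le_max_left _ _
    have hvm : v ≤ m := le_max_right _ _
    exact huv (Prod.ext (by linarith : u = 0) (by linarith : v = 0))
  have hnorm : ‖((u, v) : ℝ × ℝ)‖ = m := by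
    rw [Prod.norm_def]; simp [abs_of_nonneg hu0, abs_of_nonneg hv0, hm]
  have hρ : min 1 κ * m ≤ u + κ * v := by
    rcases max_choice u v with h | h
    · rw [hm, h]
      have := mul_le_mul_of_nonneg_right (min_le_left 1 κ) hu0
      have := mul_nonneg hκ.le hv0
      linarith
    · rw [hm, h]
      have := mul_le_mul_of_nonneg_right (min_le_right 1 κ) hv0
      linarith
  have hρ0 : 0 < u + κ * v := (mul_pos hmin hm0).trans_le hρ
  set b : E := (u + κ * v) • A with hb
  have hbn : ‖b‖ = (u + κ * v) * ‖A‖ := by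
    rw [hb, norm_smul, Real.norm_of_nonneg hρ0.le]
  have hbc : c * m ≤ ‖b‖ := by
    rw [hbn, hc]
    calc min 1 κ * ‖A‖ * m = min 1 κ * m * ‖A‖ := by ring
      _ ≤ _ := mul_le_mul_of_nonneg_right hρ hA.le
  have hcm : 0 < c * m := mul_pos hc0 hm0
  have hb0 : b ≠ 0 := norm_pos_iff.1 (hcm.trans_le hbc)
  have hrem : ‖N (u, v) - b‖ ≤ K * m ^ 2 := by
    have h := hT (u, v) (hnorm.trans_le hmδ)
    rwa [hN0, sub_zero, hDN, hnorm] at h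
  have hNne : N (u, v) ≠ 0 := by
    intro h
    rw [h, zero_sub, norm_neg] at hrem
    rw [le_div_iff₀ (by positivity)] at hmc
    nlinarith [mul_le_mul_of_nonneg_right hmc hm0.le, mul_nonneg hK (sq_nonneg m)]
  have hnb : ‖A‖⁻¹ • A = ‖b‖⁻¹ • b := by
    rw [hbn, hb, smul_smul]
    congr 1
    field_simp
  refine ⟨hNne, ?_⟩
  rw [hnb]
  calc _ ≤ 2 * ‖N (u, v) - b‖ / ‖b‖ := norm_normalize_sub_le hNne hb0
    _ ≤ 2 * (K * m ^ 2) / (c * m) := by gcongr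
    _ = 2 * K / c * m := by field_simp
    _ ≤ (2 * K / c + 1) * m := by nlinarith

/-- **Quantitative normal continuity at a rounded corner.**
If `x` has a rounded corner at `(0,0)` with limit normal `n`, then, near the
corner, `x_u × x_v ≠ 0` away from the origin, and the unit normal satisfies
`‖ν(u,v) − n‖ ≤ C · max{u,v}`. -/
theorem rounded_corner_normal_rate
    (H : ℝ) (hH : 0 < H) (x : ℝ × ℝ → E3) (hx : ContDiff ℝ 3 x)
    (t : E3) (ht : ‖t‖ = 1) (lam mu : ℝ) (hlam : 0 < lam) (hmu : 0 < mu)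
    (hxi10 : pd1 x (0, 0) = lam • t)
    (hxi01 : pd2 x (0, 0) = -(mu • t))
    (r s : E3)
    (hr : r = mu • pd1 (pd1 x) (0, 0) + lam • pd2 (pd1 x) (0, 0))
    (hs : s = lam • pd2 (pd2 x) (0, 0) + mu • pd2 (pd1 x) (0, 0))
    (hcop : ¬ LinearIndependent ℝ ![r, s, t])
    (hone : 0 < ⟪cross3 t r, cross3 t s⟫)
    (n : E3) (hn : n = ‖cross3 t r‖⁻¹ • cross3 t r) :
    ∃ C : ℝ, 0 < C ∧ ∃ H' : ℝ, H' ∈ Set.Ioc 0 H ∧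
      ∀ u v : ℝ, u ∈ Set.Icc (0 : ℝ) H' → v ∈ Set.Icc (0 : ℝ) H' → (u, v) ≠ (0, 0) →
        cross3 (pd1 x (u, v)) (pd2 x (u, v)) ≠ 0 ∧
        ‖‖cross3 (pd1 x (u, v)) (pd2 x (u, v))‖⁻¹ • cross3 (pd1 x (u, v)) (pd2 x (u, v))
          - n‖ ≤ C * max u v := by
  have ht0 : t ≠ 0 := by
    intro h; simp [h] at ht
  obtain ⟨κ, hκ, hB⟩ := cross3_pos_multiple ht0 hcop hone
  have hA : 0 < ‖cross3 t r‖ := by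
    rw [norm_pos_iff]; intro h; simp [h] at hone
  rw [hn]
  refine direction_rate (N := normalField x) (contDiff_normalField hx)
    (normalField_zero hxi10 hxi01) hκ hA (fun u v => ?_) hH
  have h := normalField_fderiv hx hxi10 hxi01 u v
  rw [← hr, ← hs, crossL_apply, crossL_apply, hB, smul_smul, ← add_smul, mul_comm v κ] at h
  exact h
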